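/- arXiv:1806.05602 — 5 statements merged into one kernel-verified Lean document; each statement's English description precedes it below -/
import Mathlib

section
/- Let α be a finite type with cardinality 2M, let A be a subset of α with cardinality D, and let k ≤ M. Then the number of fixed-point-free involutions σ of α having at least k orbits {x, σ(x)} contained in A is at most C(D, 2k) · (2k−1)!! · (2(M−k)−1)!!. -/
open Nat

theorem aux_fpf_card {β : Type*} [Fintype β] [DecidableEq β] (n : ℕ)
    (h : Fintype.card β = 2 * n) :
    (Finset.univ.filter (fun σ : Equiv.Perm β => ∀ x, σ (σ x) = x ∧ σ x ≠ x)).card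
      ≤ (2 * n - 1)‼ := by
  have h1 : (Finset.univ.filter (fun σ : Equiv.Perm β => ∀ x, σ (σ x) = x ∧ σ x ≠ x)) ⊆
      (Finset.univ.filter (fun σ : Equiv.Perm β => σ.cycleType = Multiset.replicate n 2)) := by
    intro σ hσ
    simp only [Finset.mem_filter, Finset.mem_univ, true_and] at hσ ⊢
    have h2 : ∀ c ∈ σ.cycleType, c = 2 := by
      haveI : Fact (Nat.Prime 2) := ⟨Nat.prime_two⟩
      refine Equiv.Perm.pow_prime_eq_one_iff.1 ?_
      ext x
      simp [pow_two, (hσ x).1]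
    have h3 := Multiset.eq_replicate_card.2 h2
    have h4 := σ.sum_cycleType
    have h5 : σ.support = Finset.univ := by
      ext x; simp [(hσ x).2]
    rw [h5, Finset.card_univ, h, h3] at h4
    simp at h4
    rw [h3]
    congr 1
    omega
  refine (Finset.card_le_card h1).trans ?_
  have h6 := Equiv.Perm.card_of_cycleType_mul_eq β (Multiset.replicate n 2)
  have h7 : (2 * n)! = (2 * n - 1)‼ * (2 ^ n * n !) := by
    cases n with
    | zero => simp
    | succ m =>
      rw [← Nat.doubleFactorial_two_mul]
      have := Nat.factorial_eq_mul_doubleFactorial (2 * m + 1)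
      rw [show 2 * (m + 1) = 2 * m + 1 + 1 by ring, this, mul_comm]; rfl
  have h8 : ∏ i ∈ (Multiset.replicate n 2).toFinset,
      ((Multiset.replicate n 2).count i)! = n ! := by
    by_cases hn : n = 0
    · subst hn; simp
    · rw [Multiset.toFinset_replicate, if_neg hn]; simp
  rw [h8, h] at h6
  simp only [Multiset.sum_replicate, Multiset.prod_replicate, smul_eq_mul] at h6
  rw [if_pos ⟨by omega, fun a ha => (Multiset.eq_of_mem_replicate ha).ge⟩] at h6
  rw [mul_comm n 2, Nat.sub_self, Nat.factorial_zero, one_mul, h7] at h6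
  exact (Nat.eq_of_mul_eq_mul_right (by positivity) h6).le

theorem aux_exists_sub {α : Type*} [DecidableEq α] (σ : Equiv.Perm α)
    (hσ : ∀ x, σ (σ x) = x ∧ σ x ≠ x) (B : Finset α) (hB : ∀ x ∈ B, σ x ∈ B) (k : ℕ)
    (hk : 2 * k ≤ B.card) : ∃ T ⊆ B, T.card = 2 * k ∧ ∀ x ∈ T, σ x ∈ T := by
  induction k with
  | zero => exact ⟨∅, by simp⟩
  | succ k ih =>
    obtain ⟨T, hTB, hT, hinv⟩ := ih (by omega)
    obtain ⟨x, hxB, hxT⟩ := Finset.exists_mem_notMem_of_card_lt_card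
      (show T.card < B.card by omega)
    have hy : σ x ∉ T := fun h => hxT (by simpa [(hσ x).1] using hinv _ h)
    refine ⟨insert x (insert (σ x) T), ?_, ?_, ?_⟩
    · intro y; simp only [Finset.mem_insert]
      rintro (rfl | rfl | h)
      exacts [hxB, hB _ hxB, hTB h]
    · rw [Finset.card_insert_of_notMem, Finset.card_insert_of_notMem hy, hT]
      · ring
      · simp [hxT, (hσ x).2.symm]
    · intro y; simp only [Finset.mem_insert]
      rintro (rfl | rfl | h)
      · simp
      · simp [(hσ x).1]
      · simp [hinv _ h]

theorem aux_fixed {α : Type*} [Fintype α] [DecidableEq α] (M k : ℕ)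
    (hα : Fintype.card α = 2 * M) (T : Finset α) (hT : T.card = 2 * k) :
    (Finset.univ.filter (fun σ : Equiv.Perm α =>
      (∀ x, σ (σ x) = x ∧ σ x ≠ x) ∧ ∀ x ∈ T, σ x ∈ T)).card
      ≤ (2 * k - 1)‼ * (2 * (M - k) - 1)‼ := by
  classical
  have c1 : Fintype.card {x // x ∈ T} = 2 * k := by simp [hT]
  have c2 : Fintype.card {x // x ∉ T} = 2 * (M - k) := by
    rw [Fintype.card_subtype_compl, c1, hα]; omega
  refine le_trans ?_ (Nat.mul_le_mul (aux_fpf_card k c1) (aux_fpf_card (M - k) c2))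
  rw [← Finset.card_product]
  have key : ∀ σ : Equiv.Perm α, ((∀ x, σ (σ x) = x ∧ σ x ≠ x) ∧ ∀ x ∈ T, σ x ∈ T) →
      ∀ x, σ x ∈ T ↔ x ∈ T := fun σ h x =>
    ⟨fun hx => by simpa [(h.1 x).1] using h.2 _ hx, h.2 x⟩
  refine Finset.card_le_card_of_injOn (fun σ =>
    if h : ∀ x, σ x ∈ T ↔ x ∈ T then
      (σ.subtypePerm h, σ.subtypePerm (fun x => not_congr (h x))) else 1) ?_ ?_
  · intro σ hσ
    simp only [Finset.coe_filter, Finset.mem_univ, true_and, Set.mem_setOf_eq] at hσ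
    have hk := key σ hσ
    simp only [dif_pos hk, Finset.coe_product, Set.mem_prod, Finset.mem_coe, Finset.mem_filter,
      Finset.mem_univ, true_and]
    refine ⟨fun x => ⟨Subtype.ext ?_, fun h => (hσ.1 x).2 ?_⟩,
      fun x => ⟨Subtype.ext ?_, fun h => (hσ.1 x).2 ?_⟩⟩
    · exact (hσ.1 x).1
    · exact congrArg Subtype.val h
    · exact (hσ.1 x).1
    · exact congrArg Subtype.val h
  · intro σ hσ τ hτ hst
    simp only [Finset.coe_filter, Finset.mem_univ, true_and, Set.mem_setOf_eq] at hσ hτ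
    simp only [dif_pos (key σ hσ), dif_pos (key τ hτ), Prod.mk.injEq] at hst
    ext x
    by_cases hx : x ∈ T
    · exact congrArg Subtype.val (DFunLike.congr_fun hst.1 ⟨x, hx⟩)
    · exact congrArg Subtype.val (DFunLike.congr_fun hst.2 ⟨x, hx⟩)



/-- Let `α` have cardinality `2M` and `A ⊆ α` have cardinality `D`, and let `k ≤ M`.
The number of fixed-point-free involutions of `α` with at least `k` orbits `{x, σ x}`
contained in `A` (equivalently, with at least `2k` elements `x ∈ A` such that `σ x ∈ A`)
is at most `C(D, 2k) · (2k−1)‼ · (2(M−k)−1)‼` (Equation (6) of the paper). -/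
theorem card_involutions_many_orbits_le (M D k : ℕ) (α : Type*) [Fintype α] [DecidableEq α]
    (hα : Fintype.card α = 2 * M) (A : Finset α) (hA : A.card = D) (hk : k ≤ M) :
    (Finset.univ.filter
        (fun σ : Equiv.Perm α =>
          (∀ x : α, σ (σ x) = x ∧ σ x ≠ x) ∧
          2 * k ≤ (A.filter (fun x => σ x ∈ A)).card)).card
      ≤ D.choose (2 * k) * (2 * k - 1)‼ * (2 * (M - k) - 1)‼ := by
  have h1 : (Finset.univ.filter
        (fun σ : Equiv.Perm α =>
          (∀ x : α, σ (σ x) = x ∧ σ x ≠ x) ∧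
          2 * k ≤ (A.filter (fun x => σ x ∈ A)).card)) ⊆
      (A.powersetCard (2 * k)).biUnion (fun T => Finset.univ.filter (fun σ : Equiv.Perm α =>
      (∀ x, σ (σ x) = x ∧ σ x ≠ x) ∧ ∀ x ∈ T, σ x ∈ T)) := by
    intro σ hσ
    simp only [Finset.mem_filter, Finset.mem_univ, true_and] at hσ
    obtain ⟨T, hTB, hT, hinv⟩ := aux_exists_sub σ hσ.1 _
      (by
        intro x hx
        rw [Finset.mem_filter] at hx ⊢
        rw [(hσ.1 x).1]
        exact hx.symm) k hσ.2
    simp only [Finset.mem_biUnion, Finset.mem_powersetCard, Finset.mem_filter, Finset.mem_univ,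
      true_and]
    exact ⟨T, ⟨hTB.trans (Finset.filter_subset _ _), hT⟩, hσ.1, hinv⟩
  refine (Finset.card_le_card h1).trans ?_
  rw [mul_assoc, ← hA, ← Finset.card_powersetCard]
  exact Finset.card_biUnion_le_card_mul _ _ _ fun T hT =>
    aux_fixed M k hα T (Finset.mem_powersetCard.1 hT).2
end

section
/- Let α be a finite type with cardinality 2M, let A be a subset of α with cardinality D, and let k ≤ M. Let N be the number of fixed-point-free involutions σ of α having at least k orbits {x, σ(x)} contained in A. Then N · C(2M, 2k) ≤ C(D, 2k) · C(M, k) · (2M−1)!!; equivalently, the proportion of fixed-point-free involutions of α with at least k orbits inside A, among all (2M−1)!! fixed-point-free involutions, is at most C(D, 2k) · C(M, k) / C(2M, 2k). -/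
open Nat

def FPFI (β : Type*) (σ : Equiv.Perm β) : Prop := ∀ x : β, σ (σ x) = x ∧ σ x ≠ x

theorem fpfi_count (m : ℕ) (β : Type*) [Fintype β] [DecidableEq β]
    [DecidablePred (FPFI β)] (hβ : Fintype.card β = 2 * m) :
    (Finset.univ.filter (FPFI β)).card * (2 ^ m * m !) ≤ (2 * m)! := by
  have hsub : Finset.univ.filter (FPFI β) ⊆
      (Finset.univ.filter
        (fun g : Equiv.Perm β => g.cycleType = Multiset.replicate m 2)) := by
    intro σ hσ
    simp only [Finset.mem_filter, Finset.mem_univ, true_and] at hσ ⊢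
    have h2 : σ ^ 2 = 1 := by
      ext x
      simp [pow_two, (hσ x).1]
    haveI : Fact (Nat.Prime 2) := ⟨Nat.prime_two⟩
    have h3 := Equiv.Perm.pow_prime_eq_one_iff.mp h2
    have h4 : σ.cycleType = Multiset.replicate σ.cycleType.card 2 :=
      Multiset.eq_replicate.mpr ⟨rfl, h3⟩
    have h5 : σ.support = Finset.univ := by
      ext x
      simp [(hσ x).2]
    have h6 := σ.sum_cycleType
    rw [h5, Finset.card_univ, hβ, h4, Multiset.sum_replicate] at h6
    have h7 : σ.cycleType.card = m := by
      simp only [smul_eq_mul] at h6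
      omega
    rw [h7] at h4
    exact h4
  have h := Equiv.Perm.card_of_cycleType_mul_eq (α := β) (Multiset.replicate m 2)
  have hp : (∏ n ∈ (Multiset.replicate m 2).toFinset, ((Multiset.replicate m 2).count n)!)
      = m ! := by
    rcases Nat.eq_zero_or_pos m with rfl | hm
    · simp
    · rw [Multiset.toFinset_replicate]
      simp [hm.ne']
  have hs : (Multiset.replicate m 2).sum = 2 * m := by simp [mul_comm]
  rw [hp, hs, hβ, if_pos ⟨le_rfl, fun a ha => (Multiset.eq_of_mem_replicate ha).ge⟩,
    Multiset.prod_replicate, Nat.sub_self, Nat.factorial_zero, one_mul] at h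
  rw [← h]
  exact Nat.mul_le_mul_right _ (Finset.card_le_card hsub)

theorem fpfi_restrict {α : Type*} [Fintype α] [DecidableEq α] (S : Finset α)
    [DecidablePred (FPFI {x // x ∈ S})] [DecidablePred (FPFI {x // ¬ x ∈ S})]
    [DecidablePred (fun σ : Equiv.Perm α => FPFI α σ ∧ ∀ x, σ x ∈ S ↔ x ∈ S)] :
    (Finset.univ.filter
      (fun σ : Equiv.Perm α => FPFI α σ ∧ ∀ x, σ x ∈ S ↔ x ∈ S)).card ≤
    (Finset.univ.filter (FPFI {x // x ∈ S})).card *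
      (Finset.univ.filter (FPFI {x // ¬ x ∈ S})).card := by
  classical
  rw [← Finset.card_product]
  refine Finset.card_le_card_of_injOn
    (fun σ => if h : ∀ x, σ x ∈ S ↔ x ∈ S then
      (σ.subtypePerm h, σ.subtypePerm (fun x => not_congr (h x))) else (1, 1)) ?_ ?_
  · intro σ hσ
    simp only [Finset.coe_filter, Finset.mem_univ, true_and, Set.mem_setOf_eq] at hσ
    obtain ⟨h1, h2⟩ := hσ
    simp only [dif_pos h2, Finset.coe_product, Finset.coe_filter, Finset.mem_univ, true_and,
      Set.mem_prod, Set.mem_setOf_eq]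
    refine ⟨fun x => ⟨Subtype.ext (h1 x).1, fun h => (h1 x).2 (congrArg Subtype.val h)⟩,
      fun x => ⟨Subtype.ext (h1 x).1, fun h => (h1 x).2 (congrArg Subtype.val h)⟩⟩
  · intro σ hσ τ hτ h
    simp only [Finset.coe_filter, Finset.mem_univ, true_and, Set.mem_setOf_eq] at hσ hτ
    simp only [dif_pos hσ.2, dif_pos hτ.2, Prod.mk.injEq] at h
    ext x
    by_cases hx : x ∈ S
    · exact congrArg Subtype.val (Equiv.congr_fun h.1 ⟨x, hx⟩)
    · exact congrArg Subtype.val (Equiv.congr_fun h.2 ⟨x, hx⟩)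

theorem exists_inv_subset {α : Type*} [DecidableEq α] (σ : Equiv.Perm α)
    (hσ : FPFI α σ) (B : Finset α) (hB : ∀ x ∈ B, σ x ∈ B) (k : ℕ) (hk : 2 * k ≤ B.card) :
    ∃ S ⊆ B, S.card = 2 * k ∧ ∀ x, σ x ∈ S ↔ x ∈ S := by
  induction k with
  | zero => exact ⟨∅, by simp, by simp, by simp⟩
  | succ j ih =>
    obtain ⟨S, hSB, hc, hi⟩ := ih (by omega)
    obtain ⟨x, hxB, hxS⟩ := Finset.exists_mem_notMem_of_card_lt_card (s := S) (t := B) (by omega)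
    have hx' : σ x ∉ S := fun h => hxS ((hi x).1 h)
    refine ⟨insert x (insert (σ x) S), ?_, ?_, ?_⟩
    · intro y hy
      simp only [Finset.mem_insert] at hy
      rcases hy with rfl | rfl | hy
      · exact hxB
      · exact hB _ hxB
      · exact hSB hy
    · rw [Finset.card_insert_of_notMem, Finset.card_insert_of_notMem hx', hc]
      · ring
      · simp only [Finset.mem_insert, not_or]
        exact ⟨(hσ x).2.symm, hxS⟩
    · intro y
      simp only [Finset.mem_insert, hi, σ.injective.eq_iff]
      have : σ y = x ↔ y = σ x := by
        constructor
        · rintro rfl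
          exact (hσ y).1.symm
        · rintro rfl
          exact (hσ x).1
      rw [this]
      tauto

theorem odd_dfact (M : ℕ) : (2 * M - 1)‼ * (2 ^ M * M !) = (2 * M)! := by
  cases M with
  | zero => rfl
  | succ n =>
    rw [← Nat.doubleFactorial_two_mul, mul_comm]
    exact (Nat.factorial_eq_mul_doubleFactorial (2 * n + 1)).symm

/-- Let `α` have cardinality `2M` and `A ⊆ α` have cardinality `D`, and let `k ≤ M`.
If `N` is the number of fixed-point-free involutions of `α` with at least `k` orbits
`{x, σ x}` contained in `A` (i.e., at least `2k` elements `x ∈ A` with `σ x ∈ A`), then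
`N · C(2M, 2k) ≤ C(D, 2k) · C(M, k) · (2M−1)‼`; i.e., the proportion of such involutions
among all `(2M−1)‼` fixed-point-free involutions is at most `C(D,2k)·C(M,k)/C(2M,2k)`
(the paper's main upper bound on the p-value, Equations (4) and (7)). -/
theorem pvalue_upper_bound_nat (M D k : ℕ) (α : Type*) [Fintype α] [DecidableEq α]
    (hα : Fintype.card α = 2 * M) (A : Finset α) (hA : A.card = D) (hk : k ≤ M)
    (N : ℕ)
    (hN : N = (Finset.univ.filter
        (fun σ : Equiv.Perm α =>
          (∀ x : α, σ (σ x) = x ∧ σ x ≠ x) ∧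
          2 * k ≤ (A.filter (fun x => σ x ∈ A)).card)).card) :
    N * (2 * M).choose (2 * k) ≤ D.choose (2 * k) * M.choose k * (2 * M - 1)‼ := by
  classical
  obtain ⟨l, rfl⟩ := Nat.exists_eq_add_of_le hk
  have key : ∀ S ∈ A.powersetCard (2 * k), (Finset.univ.filter
      (fun σ : Equiv.Perm α => FPFI α σ ∧ ∀ x, σ x ∈ S ↔ x ∈ S)).card *
        ((2 ^ k * k !) * (2 ^ l * l !)) ≤ (2 * k)! * (2 * l)! := by
    intro S hS
    have hSc := (Finset.mem_powersetCard.1 hS).2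
    have h1 := fpfi_count k {x // x ∈ S} (by simpa using hSc)
    have h2 := fpfi_count l {x // ¬ x ∈ S} (by
      rw [Fintype.card_subtype_compl, hα, Fintype.card_coe, hSc]; omega)
    calc _ ≤ _ := Nat.mul_le_mul_right _ (fpfi_restrict S)
      _ = _ := mul_mul_mul_comm _ _ _ _
      _ ≤ _ := Nat.mul_le_mul h1 h2
  have hNle : N ≤ ∑ S ∈ A.powersetCard (2 * k), (Finset.univ.filter
      (fun σ : Equiv.Perm α => FPFI α σ ∧ ∀ x, σ x ∈ S ↔ x ∈ S)).card := by
    rw [hN]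
    refine le_trans (Finset.card_le_card ?_) Finset.card_biUnion_le
    intro σ hσ
    simp only [Finset.mem_filter, Finset.mem_univ, true_and] at hσ
    obtain ⟨h1, h2⟩ := hσ
    obtain ⟨S, hS, hc, hi⟩ := exists_inv_subset σ h1 _ (by
      intro x hx
      simp only [Finset.mem_filter] at hx ⊢
      exact ⟨hx.2, by rw [(h1 x).1]; exact hx.1⟩) k h2
    simp only [Finset.mem_biUnion, Finset.mem_filter, Finset.mem_univ, true_and]
    exact ⟨S, Finset.mem_powersetCard.2 ⟨hS.trans (Finset.filter_subset _ _), hc⟩, h1, hi⟩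
  have hN2 : N * ((2 ^ k * k !) * (2 ^ l * l !)) ≤
      D.choose (2 * k) * ((2 * k)! * (2 * l)!) := by
    refine le_trans (Nat.mul_le_mul_right _ hNle) ?_
    rw [Finset.sum_mul]
    refine le_trans (Finset.sum_le_card_nsmul _ _ _ key) ?_
    rw [Finset.card_powersetCard, hA, smul_eq_mul]
  have e1 : (2 * (k + l)).choose (2 * k) * (2 * k)! * (2 * l)! = (2 * (k + l))! := by
    have := Nat.choose_mul_factorial_mul_factorial (n := 2 * (k + l)) (k := 2 * k) (by omega)
    rwa [show 2 * (k + l) - 2 * k = 2 * l by omega] at this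
  have e2 : (k + l).choose k * k ! * l ! = (k + l)! := by
    have := Nat.choose_mul_factorial_mul_factorial (n := k + l) (k := k) (by omega)
    rwa [show k + l - k = l by omega] at this
  have e3 := odd_dfact (k + l)
  refine Nat.le_of_mul_le_mul_right (c := (2 ^ k * k !) * (2 ^ l * l !)) ?_ (by positivity)
  calc _ = N * ((2 ^ k * k !) * (2 ^ l * l !)) * (2 * (k + l)).choose (2 * k) := by ring
    _ ≤ D.choose (2 * k) * ((2 * k)! * (2 * l)!) * (2 * (k + l)).choose (2 * k) :=
      Nat.mul_le_mul_right _ hN2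
    _ = D.choose (2 * k) * (2 * (k + l))! := by rw [← e1]; ring
    _ = _ := by rw [← e3, ← e2, pow_add]; ring
end

section
/- Let α be a finite type with cardinality 2M, let A be a subset of α with cardinality D, and let k ≤ M. Under the uniform probability distribution on the (nonempty) finite set of fixed-point-free involutions of α, the probability that the random involution has at least k orbits {x, σ(x)} contained in A is at most C(D, 2k) · C(M, k) / C(2M, 2k), as a rational number. -/
open Nat

/-- fixed-point-free involutions -/
def FPF {α : Type*} (σ : Equiv.Perm α) : Prop := ∀ x : α, σ (σ x) = x ∧ σ x ≠ x

lemma orb_eq {α : Type*} {σ : Equiv.Perm α} (h : FPF σ) (x y : α) :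
    s(y, σ y) = s(x, σ x) ↔ y = x ∨ y = σ x := by
  rw [Sym2.eq_iff]
  constructor
  · rintro (⟨h1, _⟩ | ⟨h1, _⟩)
    · exact Or.inl h1
    · exact Or.inr h1
  · rintro (rfl | rfl)
    · simp
    · right; exact ⟨rfl, (h x).1⟩

lemma card_orb {α : Type*} [DecidableEq α] {σ : Equiv.Perm α} (h : FPF σ)
    (S : Finset α) (hS : ∀ x ∈ S, σ x ∈ S) :
    S.card = 2 * (S.image (fun x => s(x, σ x))).card := by
  rw [Finset.card_eq_sum_card_image (fun x => s(x, σ x)) S, mul_comm, ← smul_eq_mul]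
  refine Finset.sum_const_nat (m := 2) ?_ 
  intro b hb
  obtain ⟨x, hx, rfl⟩ := Finset.mem_image.1 hb
  have : S.filter (fun y => s(y, σ y) = s(x, σ x)) = {x, σ x} := by
    ext y
    simp only [Finset.mem_filter, orb_eq h, Finset.mem_insert, Finset.mem_singleton]
    constructor
    · exact fun h => h.2
    · rintro (rfl | rfl)
      · exact ⟨hx, Or.inl rfl⟩
      · exact ⟨hS _ hx, Or.inr rfl⟩
  rw [this, Finset.card_pair (h x).2.symm]

lemma card_inv_le {α : Type*} [Fintype α] [DecidableEq α] {σ : Equiv.Perm α} (h : FPF σ)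
    (M k : ℕ) (hα : Fintype.card α = 2 * M) :
    (((Finset.univ : Finset α).powersetCard (2 * k)).filter
      (fun T => ∀ x ∈ T, σ x ∈ T)).card ≤ M.choose k := by
  have hM : ((Finset.univ : Finset α).image (fun x => s(x, σ x))).card = M := by
    have := card_orb h Finset.univ (by simp)
    rw [Finset.card_univ, hα] at this
    omega
  rw [← hM, ← Finset.card_powersetCard]
  refine Finset.card_le_card_of_injOn (fun T => T.image (fun x => s(x, σ x))) ?_ ?_
  · intro T hT
    simp only [Finset.coe_filter, Set.mem_ofPred_eq, Finset.mem_powersetCard] at hT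
    have := card_orb h T hT.2
    simp only [Finset.mem_coe, Finset.mem_powersetCard]
    exact ⟨Finset.image_subset_image hT.1.1, by omega⟩
  · have key : ∀ T : Finset α, (∀ x ∈ T, σ x ∈ T) →
        ∀ x, x ∈ T ↔ s(x, σ x) ∈ T.image (fun x => s(x, σ x)) := by
      intro T hT x
      constructor
      · exact fun hx => Finset.mem_image_of_mem _ hx
      · intro hx
        obtain ⟨y, hy, hxy⟩ := Finset.mem_image.1 hx
        rcases (orb_eq h y x).1 hxy.symm with rfl | rfl
        · exact hy
        · exact hT _ hy
    intro T hT T' hT' heq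
    simp only [Finset.coe_filter, Set.mem_ofPred_eq] at hT hT'
    ext x
    rw [key T hT.2, key T' hT'.2]
    dsimp only at heq
    rw [heq]

lemma exists_inv {α : Type*} [DecidableEq α] {σ : Equiv.Perm α} (h : FPF σ)
    (k : ℕ) (A : Finset α) (hA : 2 * k ≤ (A.filter (fun x => σ x ∈ A)).card) :
    ∃ T ∈ A.powersetCard (2 * k), ∀ x ∈ T, σ x ∈ T := by
  set B := A.filter (fun x => σ x ∈ A) with hB
  have hBi : ∀ x ∈ B, σ x ∈ B := by
    intro x hx
    simp only [hB, Finset.mem_filter] at hx ⊢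
    rw [(h x).1]; exact ⟨hx.2, hx.1⟩
  have hc := card_orb h B hBi
  obtain ⟨Q, hQ, hQc⟩ := Finset.exists_subset_card_eq
    (show k ≤ (B.image (fun x => s(x, σ x))).card by omega)
  have hTi : ∀ x ∈ B.filter (fun x => s(x, σ x) ∈ Q),
      σ x ∈ B.filter (fun x => s(x, σ x) ∈ Q) := by
    intro x hx
    simp only [Finset.mem_filter] at hx ⊢
    refine ⟨hBi x hx.1, ?_⟩
    rw [(orb_eq h x (σ x)).2 (Or.inr rfl)]; exact hx.2
  refine ⟨B.filter (fun x => s(x, σ x) ∈ Q), ?_, hTi⟩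
  rw [Finset.mem_powersetCard]
  refine ⟨(Finset.filter_subset _ _).trans (Finset.filter_subset _ _), ?_⟩
  rw [card_orb h _ hTi]
  congr 1
  rw [← hQc]
  congr 1
  ext q
  simp only [Finset.mem_image, Finset.mem_filter]
  constructor
  · rintro ⟨x, hx, rfl⟩; exact hx.2
  · intro hq
    obtain ⟨x, hx, rfl⟩ := Finset.mem_image.1 (hQ hq)
    exact ⟨x, ⟨hx, hq⟩, rfl⟩

lemma symm_le {α : Type*} [Fintype α] [DecidableEq α] (T T' : Finset α)
    (hT : T.card = T'.card) :
    (Finset.univ.filter (fun σ : Equiv.Perm α =>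
      (∀ x : α, σ (σ x) = x ∧ σ x ≠ x) ∧ ∀ x ∈ T, σ x ∈ T)).card ≤
    (Finset.univ.filter (fun σ : Equiv.Perm α =>
      (∀ x : α, σ (σ x) = x ∧ σ x ≠ x) ∧ ∀ x ∈ T', σ x ∈ T')).card := by
  let e : {x // x ∈ T} ≃ {x // x ∈ T'} := Finset.equivOfCardEq hT
  let g : Equiv.Perm α := e.extendSubtype
  have hg : ∀ x, x ∈ T → g x ∈ T' := fun x hx => e.extendSubtype_mem x hx
  have hg' : ∀ x, x ∈ T' → g.symm x ∈ T := by
    intro x hx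
    by_contra hn
    have := e.extendSubtype_not_mem _ hn
    exact this (by change g (g.symm x) ∈ T'; simpa using hx)
  refine Finset.card_le_card_of_injOn (fun σ => g * σ * g⁻¹) ?_ ?_
  · intro σ hσ
    simp only [Finset.coe_filter, Set.mem_ofPred_eq, Finset.mem_univ, true_and] at hσ ⊢
    obtain ⟨h1, h2⟩ := hσ
    refine ⟨fun x => ⟨?_, ?_⟩, fun x hx => ?_⟩
    · change g (σ (g.symm (g (σ (g.symm x))))) = x
      simp [(h1 _).1]
    · change g (σ (g.symm x)) ≠ x
      intro hh
      apply (h1 (g.symm x)).2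
      rw [Equiv.eq_symm_apply]; exact hh
    · exact hg _ (h2 _ (hg' _ hx))
  · intro a _ b _ hab
    simpa using hab

/-- Let `α` have cardinality `2M`, let `A ⊆ α` have cardinality `D`, and let `k ≤ M`.
Under the uniform distribution on the (nonempty) finite set of fixed-point-free
involutions of `α`, the probability that the random involution has at least `k` orbits
`{x, σ x}` contained in `A` (i.e., at least `2k` elements `x ∈ A` with `σ x ∈ A`) is at
most `C(D, 2k) · C(M, k) / C(2M, 2k)` as a rational number (the p-value bound of the
paper, Equations (4) and (7)). -/
theorem pvalue_upper_bound_prob (M D k : ℕ) (α : Type*) [Fintype α] [DecidableEq α]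
    (hα : Fintype.card α = 2 * M) (A : Finset α) (hA : A.card = D) (hk : k ≤ M)
    (hne : (Finset.univ.filter
        (fun σ : Equiv.Perm α => ∀ x : α, σ (σ x) = x ∧ σ x ≠ x)).Nonempty) :
    ((Finset.univ.filter
        (fun σ : Equiv.Perm α =>
          (∀ x : α, σ (σ x) = x ∧ σ x ≠ x) ∧
          2 * k ≤ (A.filter (fun x => σ x ∈ A)).card)).card : ℚ)
        / ((Finset.univ.filter
            (fun σ : Equiv.Perm α => ∀ x : α, σ (σ x) = x ∧ σ x ≠ x)).card : ℚ)
      ≤ (D.choose (2 * k) * M.choose k : ℚ) / ((2 * M).choose (2 * k) : ℚ) := by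
  classical
  let P : Finset (Equiv.Perm α) := Finset.univ.filter
        (fun σ : Equiv.Perm α => ∀ x : α, σ (σ x) = x ∧ σ x ≠ x)
  let N : Finset α → ℕ := fun T => (Finset.univ.filter (fun σ : Equiv.Perm α =>
      (∀ x : α, σ (σ x) = x ∧ σ x ≠ x) ∧ ∀ x ∈ T, σ x ∈ T)).card
  obtain ⟨T0, -, hT0⟩ := Finset.exists_subset_card_eq
    (show 2 * k ≤ (Finset.univ : Finset α).card by rw [Finset.card_univ, hα]; omega)
  have hN : ∀ T : Finset α, T.card = 2 * k → N T = N T0 := fun T hT =>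
    le_antisymm (symm_le T T0 (by omega)) (symm_le T0 T (by omega))
  have h1 : (Finset.univ.filter
        (fun σ : Equiv.Perm α =>
          (∀ x : α, σ (σ x) = x ∧ σ x ≠ x) ∧
          2 * k ≤ (A.filter (fun x => σ x ∈ A)).card)).card ≤ D.choose (2 * k) * N T0 := by
    have : (Finset.univ.filter
        (fun σ : Equiv.Perm α =>
          (∀ x : α, σ (σ x) = x ∧ σ x ≠ x) ∧
          2 * k ≤ (A.filter (fun x => σ x ∈ A)).card)) ⊆
        (A.powersetCard (2 * k)).biUnion (fun T => Finset.univ.filter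
          (fun σ : Equiv.Perm α =>
            (∀ x : α, σ (σ x) = x ∧ σ x ≠ x) ∧ ∀ x ∈ T, σ x ∈ T)) := by
      intro σ hσ
      simp only [Finset.mem_filter, Finset.mem_univ, true_and] at hσ
      obtain ⟨T, hT, hTi⟩ := exists_inv hσ.1 k A hσ.2
      rw [Finset.mem_biUnion]
      exact ⟨T, hT, by simpa using ⟨hσ.1, hTi⟩⟩
    refine (Finset.card_le_card this).trans ?_
    rw [← hA, ← Finset.card_powersetCard]
    refine Finset.card_biUnion_le_card_mul _ _ _ ?_
    intro T hT
    exact (hN T (Finset.mem_powersetCard.1 hT).2).le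
  have h2 : (2 * M).choose (2 * k) * N T0 ≤ P.card * M.choose k := by
    have e1 : ∑ T ∈ (Finset.univ : Finset α).powersetCard (2 * k), N T
        = (2 * M).choose (2 * k) * N T0 := by
      rw [Finset.sum_congr rfl (fun T hT => hN T (Finset.mem_powersetCard.1 hT).2),
        Finset.sum_const, Finset.card_powersetCard, Finset.card_univ, hα, smul_eq_mul]
    have e2 : ∑ T ∈ (Finset.univ : Finset α).powersetCard (2 * k), N T
        = ∑ σ ∈ P, (((Finset.univ : Finset α).powersetCard (2 * k)).filter
            (fun T => ∀ x ∈ T, σ x ∈ T)).card := by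
      refine Eq.trans ?_ (Finset.sum_card_bipartiteAbove_eq_sum_card_bipartiteBelow
        (fun (T : Finset α) (σ : Equiv.Perm α) => ∀ x ∈ T, σ x ∈ T))
      refine Finset.sum_congr rfl fun T _ => ?_
      simp only [N, P, Finset.bipartiteAbove, Finset.filter_filter]
    rw [← e1, e2]
    refine Finset.sum_le_card_nsmul _ _ _ ?_
    intro σ hσ
    exact card_inv_le (Finset.mem_filter.1 hσ).2 M k hα
  have hP : 0 < P.card := hne.card_pos
  have hC : 0 < (2 * M).choose (2 * k) := Nat.choose_pos (by omega)
  rw [div_le_div_iff₀ (by exact_mod_cast hP) (by exact_mod_cast hC)]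
  have h3 := (Nat.mul_le_mul_right ((2 * M).choose (2 * k)) h1).trans
    (show _ ≤ D.choose (2 * k) * M.choose k * P.card by
      calc _ = D.choose (2 * k) * ((2 * M).choose (2 * k) * N T0) := by ring
        _ ≤ D.choose (2 * k) * (P.card * M.choose k) := Nat.mul_le_mul_left _ h2
        _ = _ := by ring)
  exact_mod_cast h3
end

section
/- Let α be a finite type with cardinality 2M and let A be a subset of α with cardinality exactly 2k, where k ≤ M. Then the number of fixed-point-free involutions σ of α having at least k orbits {x, σ(x)} contained in A equals (2k−1)!! · (2(M−k)−1)!!. -/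
open Nat

theorem ffi_iff_cycleType {β : Type*} [Fintype β] [DecidableEq β] (n : ℕ)
    (hβ : Fintype.card β = 2 * n) (σ : Equiv.Perm β) :
    (∀ x : β, σ (σ x) = x ∧ σ x ≠ x) ↔ σ.cycleType = Multiset.replicate n 2 := by
  constructor
  · intro h
    have h2 : σ ^ 2 = 1 := by
      ext x
      simp [pow_two, (h x).1]
    have h3 := Equiv.Perm.cycleType_of_pow_prime_eq_one h2
    have hs : σ.support = Finset.univ := by
      ext x
      simp [(h x).2]
    have h4 := σ.sum_cycleType
    rw [hs, Finset.card_univ, hβ, h3, Multiset.sum_replicate, smul_eq_mul] at h4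
    rw [h3]
    congr 1
    omega
  · intro h
    have h2 : σ ^ 2 = 1 := by
      rw [Equiv.Perm.pow_prime_eq_one_iff, h]
      intro c hc
      exact Multiset.eq_of_mem_replicate hc
    have h4 := σ.sum_cycleType
    rw [h, Multiset.sum_replicate, smul_eq_mul, mul_comm, ← hβ] at h4
    have hs : σ.support = Finset.univ := Finset.eq_univ_of_card _ h4.symm
    intro x
    constructor
    · have := congrArg (fun f : Equiv.Perm β => f x) h2
      simpa [pow_two] using this
    · have : x ∈ σ.support := by rw [hs]; exact Finset.mem_univ x
      exact Equiv.Perm.mem_support.1 this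

theorem card_ffi {β : Type*} [Fintype β] [DecidableEq β] (n : ℕ)
    (hβ : Fintype.card β = 2 * n) :
    (Finset.univ.filter
        (fun σ : Equiv.Perm β => ∀ x : β, σ (σ x) = x ∧ σ x ≠ x)).card = (2 * n - 1)‼ := by
  simp_rw [ffi_iff_cycleType n hβ]
  have h := Equiv.Perm.card_of_cycleType_mul_eq β (Multiset.replicate n 2)
  rw [if_pos ⟨by simp [hβ, mul_comm], fun a ha => (Multiset.eq_of_mem_replicate ha).ge⟩] at h
  rcases n with _ | n
  · simp [hβ] at h ⊢
    convert h
  · rw [Multiset.toFinset_replicate, if_neg (by omega)] at h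
    simp only [hβ, Multiset.sum_replicate, smul_eq_mul, Multiset.prod_replicate,
      Finset.prod_singleton, Multiset.count_replicate_self, mul_comm (n+1) 2, Nat.sub_self,
      Nat.factorial_zero, one_mul] at h
    rw [← Nat.doubleFactorial_two_mul] at h
    have h5 := Nat.factorial_eq_mul_doubleFactorial (2 * n + 1)
    have e : 2 * (n + 1) = 2 * n + 1 + 1 := by ring
    rw [e] at h ⊢
    rw [h5, mul_comm] at h
    exact Nat.eq_of_mul_eq_mul_left (Nat.doubleFactorial_pos _) h

/-- Let `α` have cardinality `2M` and let `A ⊆ α` have cardinality exactly `2k`, `k ≤ M`.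
The number of fixed-point-free involutions of `α` having at least `k` orbits `{x, σ x}`
contained in `A` (i.e., at least `2k` elements `x ∈ A` with `σ x ∈ A`) equals
`(2k−1)‼ · (2(M−k)−1)‼` (the exact count in the paper's tightness argument). -/
theorem card_involutions_orbits_eq (M k : ℕ) (α : Type*) [Fintype α] [DecidableEq α]
    (hα : Fintype.card α = 2 * M) (A : Finset α) (hA : A.card = 2 * k) (hk : k ≤ M) :
    (Finset.univ.filter
        (fun σ : Equiv.Perm α =>
          (∀ x : α, σ (σ x) = x ∧ σ x ≠ x) ∧
          2 * k ≤ (A.filter (fun x => σ x ∈ A)).card)).card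
      = (2 * k - 1)‼ * (2 * (M - k) - 1)‼ := by
  have h1 := card_ffi (β := {x // x ∈ A}) k (by simpa using hA)
  have h2 := card_ffi (β := {x // ¬ x ∈ A}) (M - k) (by
    rw [Fintype.card_subtype_compl, hα]
    simp [hA]
    omega)
  rw [← h1, ← h2, ← Finset.card_product]
  symm
  refine Finset.card_bij (fun p _ => Equiv.Perm.subtypeCongr p.1 p.2) ?_ ?_ ?_
  · rintro ⟨f, g⟩ hp
    simp only [Finset.mem_product, Finset.mem_filter, Finset.mem_univ, true_and] at hp ⊢
    obtain ⟨hf, hg⟩ := hp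
    constructor
    · intro x
      by_cases hx : x ∈ A
      · rw [Equiv.Perm.subtypeCongr.left_apply _ _ hx,
          Equiv.Perm.subtypeCongr.left_apply_subtype, (hf _).1]
        exact ⟨rfl, fun h => (hf ⟨x, hx⟩).2 (Subtype.ext h)⟩
      · rw [Equiv.Perm.subtypeCongr.right_apply _ _ hx,
          Equiv.Perm.subtypeCongr.right_apply_subtype, (hg _).1]
        exact ⟨rfl, fun h => (hg ⟨x, hx⟩).2 (Subtype.ext h)⟩
    · rw [Finset.filter_true_of_mem, hA]
      intro x hx
      rw [Equiv.Perm.subtypeCongr.left_apply _ _ hx]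
      exact (f ⟨x, hx⟩).2
  · rintro p - q - h
    exact Equiv.Perm.subtypeCongrHom_injective (fun x => x ∈ A) h
  · intro σ hσ
    simp only [Finset.mem_filter, Finset.mem_univ, true_and] at hσ
    obtain ⟨hσ, hc⟩ := hσ
    have hm : ∀ x ∈ A, σ x ∈ A := by
      have := Finset.eq_of_subset_of_card_le (Finset.filter_subset (fun x => σ x ∈ A) A)
        (by rw [hA]; exact hc)
      exact Finset.filter_eq_self.1 this
    have hi : ∀ x, σ x ∈ A ↔ x ∈ A := fun x =>
      ⟨fun h => by simpa [(hσ x).1] using hm _ h, hm x⟩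
    refine ⟨(σ.subtypePerm hi, σ.subtypePerm fun x => not_congr (hi x)), ?_, ?_⟩
    · simp only [Finset.mem_product, Finset.mem_filter, Finset.mem_univ, true_and]
      exact ⟨fun x => ⟨Subtype.ext (hσ x).1, fun h => (hσ x).2 (congrArg Subtype.val h)⟩,
        fun x => ⟨Subtype.ext (hσ x).1, fun h => (hσ x).2 (congrArg Subtype.val h)⟩⟩
    · ext x
      by_cases hx : x ∈ A
      · rw [Equiv.Perm.subtypeCongr.left_apply _ _ hx]; rfl
      · rw [Equiv.Perm.subtypeCongr.right_apply _ _ hx]; rfl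
end

section
/- Let α be a finite type with cardinality 2M and let A be a subset of α with cardinality exactly 2k, where k ≤ M. Under the uniform distribution on fixed-point-free involutions of α, the probability that the random involution has at least k orbits contained in A equals exactly C(M, k) / C(2M, 2k). In particular, since C(2k, 2k) = 1, the paper's upper bound C(|A|, 2k)·C(M, k)/C(2M, 2k) is attained with equality when |A| = 2k, i.e., the bound is tight. -/
open Nat


theorem fpf_count (M : ℕ) (α : Type*) [Fintype α] [DecidableEq α]
    (hα : Fintype.card α = 2 * M) :
    (Finset.univ.filter
      (fun σ : Equiv.Perm α => ∀ x : α, σ (σ x) = x ∧ σ x ≠ x)).card * (M ! * 2 ^ M) = (2 * M)! := by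
  have h : (Finset.univ.filter
      (fun σ : Equiv.Perm α => ∀ x : α, σ (σ x) = x ∧ σ x ≠ x)) =
      Finset.univ.filter (fun σ : Equiv.Perm α => σ.cycleType = Multiset.replicate M 2) := by
    ext σ
    simp only [Finset.mem_filter, Finset.mem_univ, true_and]
    have hs := σ.sum_cycleType
    constructor
    · intro h
      have h2 : ∀ c ∈ σ.cycleType, c = 2 := by
        have : Fact (Nat.Prime 2) := ⟨Nat.prime_two⟩
        rw [← Equiv.Perm.pow_prime_eq_one_iff]
        ext x; simpa [pow_two] using (h x).1
      have h3 : σ.support = Finset.univ := by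
        ext x; simpa using (h x).2
      rw [h3, Finset.card_univ, hα] at hs
      have h4 := Multiset.eq_replicate_card.2 h2
      have h5 : σ.cycleType.card = M := by
        rw [h4, Multiset.sum_replicate, smul_eq_mul] at hs
        omega
      rwa [h5] at h4
    · intro h x
      have : Fact (Nat.Prime 2) := ⟨Nat.prime_two⟩
      have h2 : σ ^ 2 = 1 := by
        rw [Equiv.Perm.pow_prime_eq_one_iff, h]
        intro c hc; exact Multiset.eq_of_mem_replicate hc
      rw [h] at hs
      have h3 : σ.support = Finset.univ := by
        rw [← Finset.card_eq_iff_eq_univ, ← hs, hα]; simp [mul_comm]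
      constructor
      · have := congrArg (fun f => f x) h2
        simpa [pow_two] using this
      · rw [← Equiv.Perm.mem_support, h3]; simp
  rw [h]
  have key := Equiv.Perm.card_of_cycleType_mul_eq α (Multiset.replicate M 2)
  rw [if_pos] at key
  · rw [hα] at key
    rcases Nat.eq_zero_or_pos M with rfl | hM
    · simpa using key
    · rw [Multiset.toFinset_replicate, if_neg hM.ne'] at key
      simp [mul_comm M 2] at key
      rw [← key]; ring
  · constructor
    · simp [hα, mul_comm]
    · intro a ha; exact (Multiset.eq_of_mem_replicate ha).ge

theorem fpf_split (α : Type*) [Fintype α] [DecidableEq α] (A : Finset α) (k : ℕ)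
    (hA : A.card = 2 * k) :
    (Finset.univ.filter
        (fun σ : Equiv.Perm α =>
          (∀ x : α, σ (σ x) = x ∧ σ x ≠ x) ∧
          2 * k ≤ (A.filter (fun x => σ x ∈ A)).card)).card =
    (Finset.univ.filter
      (fun σ : Equiv.Perm {x // x ∈ A} => ∀ x, σ (σ x) = x ∧ σ x ≠ x)).card *
    (Finset.univ.filter
      (fun σ : Equiv.Perm {x // ¬ x ∈ A} => ∀ x, σ (σ x) = x ∧ σ x ≠ x)).card := by
  rw [← Finset.card_product]
  symm
  refine Finset.card_bij (fun p _ => Equiv.Perm.subtypeCongr p.1 p.2) ?_ ?_ ?_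
  · rintro ⟨a, b⟩ h
    simp only [Finset.mem_product, Finset.mem_filter, Finset.mem_univ, true_and] at h ⊢
    constructor
    · intro x
      by_cases hx : x ∈ A
      · have := h.1 ⟨x, hx⟩
        rw [Equiv.Perm.subtypeCongr.left_apply _ _ hx, Equiv.Perm.subtypeCongr.left_apply_subtype]
        simp only [Ne, Subtype.ext_iff] at this
        exact this
      · have := h.2 ⟨x, hx⟩
        rw [Equiv.Perm.subtypeCongr.right_apply _ _ hx, Equiv.Perm.subtypeCongr.right_apply_subtype]
        simp only [Ne, Subtype.ext_iff] at this
        exact this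
    · rw [Finset.filter_true_of_mem, hA]
      intro x hx
      rw [Equiv.Perm.subtypeCongr.left_apply _ _ hx]
      exact (a ⟨x, hx⟩).2
  · rintro a _ b _ h
    exact Equiv.Perm.subtypeCongrHom_injective (fun x => x ∈ A) h
  · intro σ h
    simp only [Finset.mem_filter, Finset.mem_univ, true_and] at h
    obtain ⟨h1, h2⟩ := h
    have h3 : ∀ x ∈ A, σ x ∈ A := by
      rw [← hA] at h2
      have := Finset.eq_of_subset_of_card_le (Finset.filter_subset _ _) h2
      exact Finset.filter_eq_self.1 this
    have h4 : ∀ x, σ x ∈ A ↔ x ∈ A := fun x =>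
      ⟨fun h => by have := h3 _ h; rwa [(h1 x).1] at this, h3 x⟩
    have h5 : ∀ x, ¬ σ x ∈ A ↔ ¬ x ∈ A := fun x => not_congr (h4 x)
    refine ⟨(σ.subtypePerm h4, σ.subtypePerm h5), ?_, ?_⟩
    · simp only [Finset.mem_product, Finset.mem_filter, Finset.mem_univ, true_and]
      constructor <;> intro x <;> simpa [Subtype.ext_iff] using h1 x
    · ext x
      by_cases hx : x ∈ A
      · simp only []
        rw [Equiv.Perm.subtypeCongr.left_apply _ _ hx]; rfl
      · simp only []
        rw [Equiv.Perm.subtypeCongr.right_apply _ _ hx]; rfl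


/-- Let `α` have cardinality `2M` and let `A ⊆ α` have cardinality exactly `2k`, `k ≤ M`.
Under the uniform distribution on fixed-point-free involutions of `α`, the probability
that the random involution has at least `k` orbits `{x, σ x}` contained in `A` equals
exactly `C(M, k) / C(2M, 2k)`; since `C(2k, 2k) = 1`, the paper's upper bound
`C(|A|, 2k)·C(M, k)/C(2M, 2k)` is attained with equality when `|A| = 2k`,
i.e., the bound is tight. -/
theorem pvalue_bound_tight (M k : ℕ) (α : Type*) [Fintype α] [DecidableEq α]
    (hα : Fintype.card α = 2 * M) (A : Finset α) (hA : A.card = 2 * k) (hk : k ≤ M) :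
    ((Finset.univ.filter
        (fun σ : Equiv.Perm α =>
          (∀ x : α, σ (σ x) = x ∧ σ x ≠ x) ∧
          2 * k ≤ (A.filter (fun x => σ x ∈ A)).card)).card : ℚ)
        / ((Finset.univ.filter
            (fun σ : Equiv.Perm α => ∀ x : α, σ (σ x) = x ∧ σ x ≠ x)).card : ℚ)
      = (M.choose k : ℚ) / ((2 * M).choose (2 * k) : ℚ) ∧
    (A.card.choose (2 * k) * M.choose k : ℚ) / ((2 * M).choose (2 * k) : ℚ)
      = (M.choose k : ℚ) / ((2 * M).choose (2 * k) : ℚ) := by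
  refine ⟨?_, by rw [hA]; simp⟩
  rw [fpf_split α A k hA]
  have e0 := fpf_count M α hα
  have e1 := fpf_count k {x // x ∈ A} (by simp [hA])
  have e2 := fpf_count (M - k) {x // ¬ x ∈ A} (by
    rw [Fintype.card_subtype_compl, hα]; simp [hA]; omega)
  obtain ⟨m, rfl⟩ := Nat.exists_eq_add_of_le hk
  rw [Nat.add_sub_cancel_left] at e2
  have c1 := Nat.add_choose_mul_factorial_mul_factorial k m
  have c2 := Nat.add_choose_mul_factorial_mul_factorial (2 * k) (2 * m)
  rw [← Nat.choose_symm_add] at c1 c2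
  rw [← mul_add] at c2
  generalize (Finset.card _) = x at e1 ⊢
  generalize hy : (Finset.card (Finset.univ.filter
      (fun σ : Equiv.Perm {x // ¬ x ∈ A} => ∀ x, σ (σ x) = x ∧ σ x ≠ x))) = y at e2 ⊢
  generalize hz : (Finset.card (Finset.univ.filter
      (fun σ : Equiv.Perm α => ∀ x, σ (σ x) = x ∧ σ x ≠ x))) = z at e0 ⊢
  have p0 := (2 * (k + m)).factorial_pos
  have z0 : z ≠ 0 := by rintro rfl; omega
  have b0 : (2 * (k + m)).choose (2 * k) ≠ 0 := (Nat.choose_pos (by omega)).ne'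
  generalize (2 * (k + m)).choose (2 * k) = b at *
  generalize (k + m).choose k = a at *
  rw [div_eq_div_iff (by exact_mod_cast z0) (by exact_mod_cast b0)]
  norm_cast
  have q : 0 < k ! * m ! * 2 ^ (k + m) := by positivity
  apply Nat.eq_of_mul_eq_mul_right q
  rw [← e1, ← e2, ← e0, ← c1] at c2
  rw [← c1] at e0
  calc x * y * b * (k ! * m ! * 2 ^ (k + m)) = b * (x * (k ! * 2 ^ k)) * (y * (m ! * 2 ^ m)) := by ring
    _ = _ := by rw [c2]; ring
end
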